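/- Let k ≥ r ≥ 0 and let D be a distribution over [0,1]^d × {±1} that puts all mass on positive labels y = +1. Then with probability 1−δ over an i.i.d. sample of size m, for every w ∈ ℝ_+^d with ‖w‖₁ ≤ k, the expected Winnow loss satisfies ℓ(w, D) ≤ ℓ̂(w) + C·sqrt(rk·(ln(d)·ln³(3m) + ln(1/δ))/m) for a universal constant C. -/

import Mathlib

open MeasureTheory

/-- Dyadic trees of samples. -/
def Tr (ι : Type) : ℕ → Type
  | 0 => ι
  | s + 1 => Tr ι s × Tr ι s

noncomputable instance Tr.fintype (ι : Type) [Fintype ι] : ∀ s, Fintype (Tr ι s)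
  | 0 => inferInstanceAs (Fintype ι)
  | s + 1 => by
      haveI := Tr.fintype ι s
      exact inferInstanceAs (Fintype (Tr ι s × Tr ι s))

def Tr.wt {ι : Type} (q : ι → ℝ) : ∀ s, Tr ι s → ℝ
  | 0, t => q t
  | s + 1, t => Tr.wt q s t.1 * Tr.wt q s t.2

noncomputable def Tr.av {ι : Type} (y : ι → ℝ) : ∀ s, Tr ι s → ℝ
  | 0, t => y t
  | s + 1, t => (Tr.av y s t.1 + Tr.av y s t.2) / 2

section
set_option linter.unusedSectionVars false
variable {ι : Type} [Fintype ι]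

lemma Tr.sum_zero (f : Tr ι 0 → ℝ) : ∑ t, f t = ∑ j : ι, f j := rfl
lemma Tr.sum_succ (s : ℕ) (f : Tr ι (s+1) → ℝ) :
    ∑ t, f t = ∑ a : Tr ι s, ∑ b : Tr ι s, f (a, b) := 
  Fintype.sum_prod_type (f := fun t : Tr ι s × Tr ι s => f t)

lemma Tr.card (s : ℕ) : Fintype.card (Tr ι s) = Fintype.card ι ^ (2 ^ s) := by
  induction s with
  | zero => simp; rfl
  | succ s ih =>
    have : Fintype.card (Tr ι (s+1)) = Fintype.card (Tr ι s) * Fintype.card (Tr ι s) :=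
      Fintype.card_prod _ _
    rw [this, ih, pow_succ 2, pow_mul, sq]

variable {q y : ι → ℝ}

lemma Tr.wt_nonneg (hq : ∀ j, 0 ≤ q j) (s : ℕ) (t : Tr ι s) : 0 ≤ Tr.wt q s t := by
  induction s with
  | zero => exact hq t
  | succ s ih => exact mul_nonneg (ih _) (ih _)

lemma Tr.av_nonneg (hy : ∀ j, 0 ≤ y j) (s : ℕ) (t : Tr ι s) : 0 ≤ Tr.av y s t := by
  induction s with
  | zero => exact hy t
  | succ s ih => exact div_nonneg (add_nonneg (ih _) (ih _)) (by norm_num)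

lemma Tr.sum_wt (hq : ∑ j, q j = 1) (s : ℕ) : ∑ t, Tr.wt q s t = 1 := by
  induction s with
  | zero => exact hq
  | succ s ih =>
    rw [Tr.sum_succ]
    simp only [Tr.wt, ← Finset.mul_sum, ih, mul_one]

lemma Tr.sum_fst (hq : ∑ j, q j = 1) (s : ℕ) (f : Tr ι s → ℝ) :
    ∑ t : Tr ι (s+1), Tr.wt q (s+1) t * f t.1 = ∑ t, Tr.wt q s t * f t := by
  rw [Tr.sum_succ]
  refine Finset.sum_congr rfl fun a _ => ?_
  simp only [Tr.wt]
  simp_rw [mul_right_comm _ _ (f a)]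
  rw [← Finset.mul_sum, Tr.sum_wt hq, mul_one]

lemma Tr.mean (hq : ∑ j, q j = 1) (z : ℝ) (hz : ∑ j, q j * (y j - z) = 0) (s : ℕ) :
    ∑ t, Tr.wt q s t * (Tr.av y s t - z) = 0 := by
  induction s with
  | zero => exact hz
  | succ s ih =>
    rw [Tr.sum_succ]
    have : ∀ a b : Tr ι s, Tr.wt q (s+1) (a,b) * (Tr.av y (s+1) (a,b) - z)
      = (Tr.wt q s a * (Tr.av y s a - z)) * Tr.wt q s b / 2 
        + Tr.wt q s a * (Tr.wt q s b * (Tr.av y s b - z)) / 2 := by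
      intro a b; simp only [Tr.wt, Tr.av]; ring
    simp_rw [this, Finset.sum_add_distrib, ← Finset.sum_div, ← Finset.mul_sum, ih, Tr.sum_wt hq]
    simp [ih]

lemma Tr.var (hq : ∑ j, q j = 1) (z : ℝ) (hz : ∑ j, q j * (y j - z) = 0) (s : ℕ) :
    ∑ t, Tr.wt q s t * (Tr.av y s t - z)^2 = (∑ j, q j * (y j - z)^2) / 2 ^ s := by
  induction s with
  | zero => simp; rfl
  | succ s ih =>
    rw [Tr.sum_succ]
    have : ∀ a b : Tr ι s, Tr.wt q (s+1) (a,b) * (Tr.av y (s+1) (a,b) - z)^2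
      = (Tr.wt q s a * (Tr.av y s a - z)^2) * Tr.wt q s b / 4 
        + (Tr.wt q s a * (Tr.wt q s b * (Tr.av y s b - z)^2)) / 4
        + (Tr.wt q s a * (Tr.av y s a - z)) * (Tr.wt q s b * (Tr.av y s b - z)) / 2 := by
      intro a b; simp only [Tr.wt, Tr.av]; ring
    simp_rw [this, Finset.sum_add_distrib, ← Finset.sum_div, ← Finset.mul_sum, ih, Tr.sum_wt hq,
      Tr.mean hq z hz, ← Finset.sum_mul, ih, Tr.sum_wt hq]
    simp only [mul_one, mul_zero, Finset.sum_const_zero]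
    rw [pow_succ]; field_simp; ring

lemma phi_point {r z v : ℝ} (hr : 0 ≤ r) (hz : 2 * r < z) (hv : 0 ≤ v) :
    (max 0 (r - v) - max 0 (r - z))^2 ≤ 2 * r / z * (v - z)^2 := by
  have hz0 : 0 < z := by linarith
  rw [max_eq_left (by linarith : r - z ≤ 0)]
  rcases le_total (r - v) 0 with h | h
  · rw [max_eq_left h]; simp; positivity
  · rw [max_eq_right h, div_mul_eq_mul_div, le_div_iff₀ hz0]
    have h1 : (r - v)^2 ≤ r * r := by nlinarith
    have h2 : (z/2)^2 ≤ (v - z)^2 := by nlinarith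
    have h3 : (r-v)^2 * z ≤ r * r * z := by nlinarith
    have h4 : r * (r * z) ≤ r * (z*z/2) := by
      apply mul_le_mul_of_nonneg_left _ hr; nlinarith
    nlinarith

lemma phi_lip (r z v : ℝ) : (max 0 (r - v) - max 0 (r - z))^2 ≤ (v - z)^2 := by
  apply sq_le_sq.2
  have := abs_max_sub_max_le_abs (r - v) (r - z) 0
  rw [max_comm 0, max_comm 0]
  refine this.trans (le_of_eq ?_)
  rw [show r - v - (r - z) = -(v - z) by ring, abs_neg]

lemma Tr.phi_var {k r : ℝ} (hr : 0 ≤ r) (hk : 0 ≤ k) (hq0 : ∀ j, 0 ≤ q j) (hq : ∑ j, q j = 1)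
    (hy0 : ∀ j, 0 ≤ y j) (hyk : ∀ j, y j ≤ k) (s : ℕ) :
    ∑ t, Tr.wt q s t * (max 0 (r - Tr.av y s t) - max 0 (r - ∑ j, q j * y j))^2
      ≤ 2 * r * k / 2 ^ s := by
  set z := ∑ j, q j * y j with hzdef
  have hz : ∑ j, q j * (y j - z) = 0 := by
    simp_rw [mul_sub, Finset.sum_sub_distrib, ← Finset.sum_mul, hq]; simp [hzdef]
  have hz0 : 0 ≤ z := Finset.sum_nonneg fun j _ => mul_nonneg (hq0 j) (hy0 j)
  have hv : ∑ j, q j * (y j - z)^2 ≤ k * z := by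
    have e : ∀ j, q j * (y j - z)^2 = q j * y j ^2 - z * (q j * y j) - z * (q j * (y j - z)) := by
      intro j; ring
    simp_rw [e, Finset.sum_sub_distrib, ← Finset.mul_sum, hz]
    rw [← hzdef]
    have : ∑ j, q j * y j ^ 2 ≤ k * z := by
      rw [hzdef, Finset.mul_sum]
      refine Finset.sum_le_sum fun j _ => ?_
      have := mul_nonneg (mul_nonneg (hq0 j) (hy0 j)) (sub_nonneg.2 (hyk j))
      nlinarith
    nlinarith
  have hV : ∑ t, Tr.wt q s t * (Tr.av y s t - z)^2 ≤ k * z / 2 ^ s := by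
    rw [Tr.var hq z hz]; gcongr
  rcases le_or_gt z (2 * r) with h | h
  · calc _ ≤ ∑ t, Tr.wt q s t * (Tr.av y s t - z)^2 := Finset.sum_le_sum fun t _ =>
          mul_le_mul_of_nonneg_left (phi_lip _ _ _) (Tr.wt_nonneg hq0 s t)
      _ ≤ k * z / 2 ^ s := hV
      _ ≤ _ := by gcongr ?_ / _; nlinarith
  · have hzp : 0 < z := by linarith
    calc _ ≤ ∑ t, 2 * r / z * (Tr.wt q s t * (Tr.av y s t - z)^2) := Finset.sum_le_sum fun t _ => by
          have := mul_le_mul_of_nonneg_left (phi_point hr h (Tr.av_nonneg hy0 s t)) (Tr.wt_nonneg hq0 s t)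
          linarith
      _ = 2 * r / z * ∑ t, (Tr.wt q s t * (Tr.av y s t - z)^2) := by rw [Finset.mul_sum]
      _ ≤ 2 * r / z * (k * z / 2 ^ s) := by gcongr
      _ = _ := by field_simp
end

def sg (b : Bool) : ℝ := if b then 1 else -1

open Classical in
lemma chern {m : ℕ} (a : Fin m → ℝ) (l c : ℝ) (hl : 0 < l) :
    ((Finset.univ.filter fun σ : Fin m → Bool =>
      l / 2 * ∑ i, a i ^ 2 + c / l < ∑ i, sg (σ i) * a i).card : ℝ) ≤ 2 ^ m * Real.exp (-c) := by
  have key : ∑ σ : Fin m → Bool, Real.exp (l * ∑ i, sg (σ i) * a i)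
      ≤ 2 ^ m * Real.exp (l^2 / 2 * ∑ i, a i ^ 2) := by
    have : ∀ σ : Fin m → Bool, Real.exp (l * ∑ i, sg (σ i) * a i)
        = ∏ i, Real.exp (l * (sg (σ i) * a i)) := by
      intro σ; rw [Finset.mul_sum, Real.exp_sum]
    simp_rw [this]
    have h2 := Finset.prod_univ_sum (fun _ : Fin m => (Finset.univ : Finset Bool))
      (fun i b => Real.exp (l * (sg b * a i)))
    rw [Fintype.piFinset_univ] at h2
    rw [← h2, Finset.mul_sum, Real.exp_sum]
    have : (2:ℝ)^m = ∏ i : Fin m, 2 := by simp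
    rw [this, ← Finset.prod_mul_distrib]
    refine Finset.prod_le_prod (fun i _ => by positivity) fun i _ => ?_
    have := Real.cosh_le_exp_half_sq (l * a i)
    rw [Real.cosh_eq] at this
    simp only [Fintype.sum_bool, sg]
    simp only [if_true, Bool.false_eq_true, if_false]
    rw [show l * (1 * a i) = l * a i by ring, show l * (-1 * a i) = -(l * a i) by ring,
      show l^2/2 * a i ^ 2 = (l * a i)^2/2 by ring]
    linarith
  set F := (Finset.univ.filter fun σ : Fin m → Bool =>
      l / 2 * ∑ i, a i ^ 2 + c / l < ∑ i, sg (σ i) * a i)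
  have h1 : (F.card : ℝ) * Real.exp (l^2/2 * ∑ i, a i ^ 2 + c) ≤
      ∑ σ : Fin m → Bool, Real.exp (l * ∑ i, sg (σ i) * a i) := by
    rw [← nsmul_eq_mul]
    refine (Finset.card_nsmul_le_sum F _ _ fun σ hσ => ?_).trans
      (Finset.sum_le_sum_of_subset_of_nonneg (Finset.subset_univ F) fun _ _ _ => by positivity)
    have := (Finset.mem_filter.1 hσ).2
    apply Real.exp_le_exp.2
    have h3 := mul_le_mul_of_nonneg_left this.le hl.le
    rw [mul_add, mul_div_cancel₀ _ hl.ne'] at h3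
    linarith
  have h4 := h1.trans key
  rw [Real.exp_add] at h4
  rw [Real.exp_neg, ← div_eq_mul_inv, le_div_iff₀ (Real.exp_pos _)]
  have := Real.exp_pos (l^2/2 * ∑ i, a i ^ 2)
  exact le_of_mul_le_mul_right (by linarith) this

open Classical in
lemma chern_max {m : ℕ} {T : Type} [Fintype T] (g : T → Fin m → ℝ) (l c τ : ℝ) (hl : 0 < l)
    (hc : Real.log (Fintype.card T) + τ ≤ c) :
    ((Finset.univ.filter fun σ : Fin m → Bool =>
      ∃ t, l / 2 * ∑ i, g t i ^ 2 + c / l < ∑ i, sg (σ i) * g t i).card : ℝ)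
      ≤ 2 ^ m * Real.exp (-τ) := by
  have : (Finset.univ.filter fun σ : Fin m → Bool =>
      ∃ t, l / 2 * ∑ i, g t i ^ 2 + c / l < ∑ i, sg (σ i) * g t i) =
      Finset.univ.biUnion fun t => Finset.univ.filter fun σ : Fin m → Bool =>
      l / 2 * ∑ i, g t i ^ 2 + c / l < ∑ i, sg (σ i) * g t i := by
    ext σ; simp
  rw [this]
  have h1 : ((Finset.univ.biUnion fun t => Finset.univ.filter fun σ : Fin m → Bool =>
      l / 2 * ∑ i, g t i ^ 2 + c / l < ∑ i, sg (σ i) * g t i).card : ℝ) ≤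
      ∑ t : T, (2 ^ m * Real.exp (-c)) := by
    refine le_trans (Nat.cast_le.2 Finset.card_biUnion_le) ?_
    push_cast
    exact Finset.sum_le_sum fun t _ => chern (g t) l c hl
  refine h1.trans ?_
  rw [Finset.sum_const, nsmul_eq_mul, Finset.card_univ]
  rcases Nat.eq_zero_or_pos (Fintype.card T) with h0 | h0
  · rw [h0]; simp; positivity
  have h0' : (0:ℝ) < Fintype.card T := by exact_mod_cast h0
  have h2 : (Fintype.card T : ℝ) * Real.exp (-c) ≤ Real.exp (-τ) := by
    conv_lhs => rw [← Real.exp_log h0']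
    rw [← Real.exp_add]; apply Real.exp_le_exp.2; linarith
  have : (0:ℝ) < 2^m := by positivity
  nlinarith

/-- Difference of losses at level `s`. -/
noncomputable def Tr.H {ι : Type} {m : ℕ} (r : ℝ) (A B : Fin m → ι → ℝ) (s : ℕ) (t : Tr ι s)
    (i : Fin m) : ℝ :=
  max 0 (r - Tr.av (B i) s t) - max 0 (r - Tr.av (A i) s t)

/-- Difference of losses for the mean. -/
noncomputable def hq {ι : Type} [Fintype ι] {m : ℕ} (r : ℝ) (A B : Fin m → ι → ℝ) (q : ι → ℝ)
    (i : Fin m) : ℝ :=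
  max 0 (r - ∑ j, q j * B i j) - max 0 (r - ∑ j, q j * A i j)

section
variable {ι : Type} [Fintype ι] {m : ℕ} {r k : ℝ} {A B : Fin m → ι → ℝ} {q : ι → ℝ}

lemma Tr.H_var (hr : 0 ≤ r) (hk : 0 ≤ k) (hA : ∀ i j, 0 ≤ A i j ∧ A i j ≤ k)
    (hB : ∀ i j, 0 ≤ B i j ∧ B i j ≤ k) (hq0 : ∀ j, 0 ≤ q j) (hq1 : ∑ j, q j = 1)
    (s : ℕ) (i : Fin m) :
    ∑ t, Tr.wt q s t * (Tr.H r A B s t i - hq r A B q i)^2 ≤ 8 * (r * k) / 2 ^ s := by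
  have h1 := Tr.phi_var hr hk hq0 hq1 (fun j => (hA i j).1) (fun j => (hA i j).2) s
  have h2 := Tr.phi_var hr hk hq0 hq1 (fun j => (hB i j).1) (fun j => (hB i j).2) s
  calc _ ≤ ∑ t, (2 * (Tr.wt q s t * (max 0 (r - Tr.av (B i) s t) - max 0 (r - ∑ j, q j * B i j))^2)
        + 2 * (Tr.wt q s t * (max 0 (r - Tr.av (A i) s t) - max 0 (r - ∑ j, q j * A i j))^2)) := by
        refine Finset.sum_le_sum fun t _ => ?_
        rw [← mul_assoc, ← mul_assoc, mul_comm 2, mul_assoc, mul_assoc, ← mul_add]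
        refine mul_le_mul_of_nonneg_left ?_ (Tr.wt_nonneg hq0 s t)
        unfold Tr.H hq
        generalize max 0 (r - Tr.av (B i) s t) = a
        generalize max 0 (r - Tr.av (A i) s t) = b
        generalize max 0 (r - ∑ j, q j * B i j) = c
        generalize max 0 (r - ∑ j, q j * A i j) = e
        nlinarith [sq_nonneg ((a - c) + (b - e))]
    _ ≤ 2 * (2 * r * k / 2 ^ s) + 2 * (2 * r * k / 2 ^ s) := by
        rw [Finset.sum_add_distrib, ← Finset.mul_sum, ← Finset.mul_sum]; gcongr
    _ = _ := by ring

lemma Tr.H_step (hr : 0 ≤ r) (hk : 0 ≤ k) (hA : ∀ i j, 0 ≤ A i j ∧ A i j ≤ k)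
    (hB : ∀ i j, 0 ≤ B i j ∧ B i j ≤ k) (hq0 : ∀ j, 0 ≤ q j) (hq1 : ∑ j, q j = 1)
    (s : ℕ) (i : Fin m) :
    ∑ t, Tr.wt q (s+1) t * (Tr.H r A B (s+1) t i - Tr.H r A B s t.1 i)^2
      ≤ 24 * (r * k) / 2 ^ s := by
  have h1 := Tr.H_var hr hk hA hB hq0 hq1 (s+1) i
  have h2 := Tr.H_var hr hk hA hB hq0 hq1 s i
  rw [← Tr.sum_fst hq1 s (fun t => (Tr.H r A B s t i - hq r A B q i)^2)] at h2
  calc _ ≤ ∑ t, (2 * (Tr.wt q (s+1) t * (Tr.H r A B (s+1) t i - hq r A B q i)^2)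
        + 2 * (Tr.wt q (s+1) t * (Tr.H r A B s t.1 i - hq r A B q i)^2)) := by
        refine Finset.sum_le_sum fun t _ => ?_
        rw [← mul_assoc, ← mul_assoc, mul_comm 2, mul_assoc, mul_assoc, ← mul_add]
        refine mul_le_mul_of_nonneg_left ?_ (Tr.wt_nonneg hq0 (s+1) t)
        generalize Tr.H r A B (s+1) t i = a
        generalize Tr.H r A B s t.1 i = b
        generalize hq r A B q i = c
        nlinarith [sq_nonneg ((a - c) + (b - c))]
    _ ≤ 2 * (8 * (r * k) / 2 ^ (s+1)) + 2 * (8 * (r * k) / 2 ^ s) := by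
        rw [Finset.sum_add_distrib, ← Finset.mul_sum, ← Finset.mul_sum]; gcongr
    _ = _ := by rw [pow_succ]; field_simp; ring

/-- averaging a uniform bound over a posterior -/
lemma avg_bound {T : Type} [Fintype T] {p : T → ℝ} (hp : ∀ t, 0 ≤ p t) (hp1 : ∑ t, p t = 1)
    (g : T → Fin m → ℝ) (σ : Fin m → Bool) (l c V : ℝ) (hl : 0 < l)
    (hV : ∀ i, ∑ t, p t * g t i ^ 2 ≤ V)
    (hg : ∀ t, ∑ i, sg (σ i) * g t i ≤ l / 2 * ∑ i, g t i ^ 2 + c / l) :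
    ∑ t, p t * ∑ i, sg (σ i) * g t i ≤ l / 2 * (m * V) + c / l := by
  calc _ ≤ ∑ t, p t * (l / 2 * ∑ i, g t i ^ 2 + c / l) :=
        Finset.sum_le_sum fun t _ => mul_le_mul_of_nonneg_left (hg t) (hp t)
    _ = l / 2 * ∑ i, ∑ t, p t * g t i ^ 2 + c / l := by
        rw [Finset.sum_comm]
        simp_rw [mul_add, Finset.sum_add_distrib, ← Finset.sum_mul, hp1, one_mul, ← Finset.mul_sum]
        rw [Finset.mul_sum]
        congr 1
        exact Finset.sum_congr rfl fun t _ => by ring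
    _ ≤ l / 2 * ∑ i : Fin m, V + c / l := by
        gcongr with i; exact hV i
    _ = _ := by simp

lemma sg_mul_le (b : Bool) (x e : ℝ) (he : 0 < e) : sg b * x ≤ e / 2 + x ^ 2 / (2 * e) := by
  have : e / 2 + x ^ 2 / (2 * e) = (e^2 + x^2) / (2 * e) := by field_simp
  rw [this, le_div_iff₀ (by positivity)]
  cases b <;> simp only [sg, if_true, Bool.false_eq_true, if_false] <;>
    nlinarith [sq_nonneg (x - e), sq_nonneg (x + e)]

lemma chain (hr : 0 ≤ r) (hrk : r ≤ k) (hA : ∀ i j, 0 ≤ A i j ∧ A i j ≤ k)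
    (hB : ∀ i j, 0 ≤ B i j ∧ B i j ≤ k) (hq0 : ∀ j, 0 ≤ q j) (hq1 : ∑ j, q j = 1)
    (σ : Fin m → Bool) (l c : ℕ → ℝ) (S : ℕ) (e : ℝ) (he : 0 < e) (hl : ∀ s, 0 < l s)
    (h0 : ∀ t, ∑ i, sg (σ i) * Tr.H r A B 0 t i ≤ l 0 / 2 * ∑ i, Tr.H r A B 0 t i ^ 2 + c 0 / l 0)
    (hs : ∀ s < S, ∀ t : Tr ι (s+1), ∑ i, sg (σ i) * (Tr.H r A B (s+1) t i - Tr.H r A B s t.1 i)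
      ≤ l s / 2 * ∑ i, (Tr.H r A B (s+1) t i - Tr.H r A B s t.1 i) ^ 2 + c s / l s) :
    ∑ i, sg (σ i) * hq r A B q i ≤
      (l 0 / 2 * (m * (24 * (r * k) / 2 ^ 0)) + c 0 / l 0) +
      ∑ s ∈ Finset.range S, (l s / 2 * (m * (24 * (r * k) / 2 ^ s)) + c s / l s)
      + m * (e / 2 + 8 * (r * k) / 2 ^ S / (2 * e)) := by
  have hk : 0 ≤ k := hr.trans hrk
  have main : ∀ n ≤ S, ∑ t, Tr.wt q n t * ∑ i, sg (σ i) * Tr.H r A B n t i ≤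
      (l 0 / 2 * (m * (24 * (r * k) / 2 ^ 0)) + c 0 / l 0) +
      ∑ s ∈ Finset.range n, (l s / 2 * (m * (24 * (r * k) / 2 ^ s)) + c s / l s) := by
    intro n
    induction n with
    | zero =>
      intro _
      simp only [Finset.range_zero, Finset.sum_empty, add_zero]
      refine avg_bound (Tr.wt_nonneg hq0 0) (Tr.sum_wt hq1 0) _ σ _ _ _ (hl 0) (fun i => ?_) h0
      calc _ ≤ ∑ t, Tr.wt q 0 t * (r * k) := by
            refine Finset.sum_le_sum fun t _ => mul_le_mul_of_nonneg_left ?_ (Tr.wt_nonneg hq0 0 t)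
            unfold Tr.H
            have a1 : max 0 (r - Tr.av (B i) 0 t) ≤ r := max_le hr (by
              have := Tr.av_nonneg (fun j => (hB i j).1) 0 t; linarith)
            have a2 : max 0 (r - Tr.av (A i) 0 t) ≤ r := max_le hr (by
              have := Tr.av_nonneg (fun j => (hA i j).1) 0 t; linarith)
            have a3 := le_max_left 0 (r - Tr.av (B i) 0 t)
            have a4 := le_max_left 0 (r - Tr.av (A i) 0 t)
            have : (max 0 (r - Tr.av (B i) 0 t) - max 0 (r - Tr.av (A i) 0 t))^2 ≤ r^2 :=
              sq_le_sq' (by linarith) (by linarith)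
            nlinarith
        _ ≤ _ := by
            rw [← Finset.sum_mul, Tr.sum_wt hq1]
            have := mul_nonneg hr hk
            norm_num; linarith
    | succ n ih =>
      intro hn
      have ih := ih (by omega)
      rw [Finset.sum_range_succ, ← add_assoc]
      have step := avg_bound (Tr.wt_nonneg hq0 (n+1)) (Tr.sum_wt hq1 (n+1))
        (fun t i => Tr.H r A B (n+1) t i - Tr.H r A B n t.1 i) σ _ _ _ (hl n)
        (Tr.H_step hr hk hA hB hq0 hq1 n) (hs n (by omega))
      simp_rw [mul_sub, Finset.sum_sub_distrib, mul_sub, Finset.sum_sub_distrib] at step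
      rw [Tr.sum_fst hq1 n (fun t => ∑ i, sg (σ i) * Tr.H r A B n t i)] at step
      linarith
  have fin : ∑ i, sg (σ i) * hq r A B q i - ∑ t, Tr.wt q S t * ∑ i, sg (σ i) * Tr.H r A B S t i
      ≤ m * (e / 2 + 8 * (r * k) / 2 ^ S / (2 * e)) := by
    have e1 : ∑ t, Tr.wt q S t * ∑ i, sg (σ i) * Tr.H r A B S t i
        = ∑ i, ∑ t, Tr.wt q S t * (sg (σ i) * Tr.H r A B S t i) := by
      rw [Finset.sum_comm]; simp_rw [Finset.mul_sum]
    rw [e1, ← Finset.sum_sub_distrib]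
    have : (m : ℝ) * (e / 2 + 8 * (r * k) / 2 ^ S / (2 * e))
      = ∑ i : Fin m, (e / 2 + 8 * (r * k) / 2 ^ S / (2 * e)) := by
      rw [Finset.sum_const, Finset.card_univ, Fintype.card_fin, nsmul_eq_mul]
    rw [this]
    refine Finset.sum_le_sum fun i _ => ?_
    calc _ = ∑ t, Tr.wt q S t * (sg (σ i) * -(Tr.H r A B S t i - hq r A B q i)) := by
          have : sg (σ i) * hq r A B q i = ∑ t, Tr.wt q S t * (sg (σ i) * hq r A B q i) := by
            rw [← Finset.sum_mul, Tr.sum_wt hq1, one_mul]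
          rw [this, ← Finset.sum_sub_distrib]
          exact Finset.sum_congr rfl fun t _ => by ring
      _ ≤ ∑ t, Tr.wt q S t * (e / 2 + (Tr.H r A B S t i - hq r A B q i)^2 / (2 * e)) := by
          refine Finset.sum_le_sum fun t _ => mul_le_mul_of_nonneg_left ?_ (Tr.wt_nonneg hq0 S t)
          have := sg_mul_le (σ i) (-(Tr.H r A B S t i - hq r A B q i)) e he
          rwa [neg_sq] at this
      _ = e / 2 + (∑ t, Tr.wt q S t * (Tr.H r A B S t i - hq r A B q i)^2) / (2 * e) := by
          simp_rw [mul_add, Finset.sum_add_distrib, ← Finset.sum_mul, Tr.sum_wt hq1, one_mul,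
            Finset.sum_div, mul_div_assoc]
      _ ≤ _ := by
          gcongr; exact Tr.H_var hr hk hA hB hq0 hq1 S i
  have := main S le_rfl
  linarith

end

lemma level_bound (P a b M : ℝ) (hP : 0 < P) (hM : M = P^2) (ha : 0 < a) (hb : 0 < b) (s : ℕ) :
    (b / P * (3/2)^s + a / P * 2^s) / 2 * (24 * M / 2 ^ s) +
      (7 * 2 ^ s * a^2 + b^2) / (b / P * (3/2)^s + a / P * 2^s) ≤
    P * b * (12 * (3/4)^s + (2/3)^s) + 19 * (P * a) := by
  have h1 : (b / P * (3/2)^s + a / P * 2^s) / 2 * (24 * M / 2 ^ s)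
      = P * b * (12 * (3/4)^s) + 12 * (P * a) := by
    rw [hM, show (3/4:ℝ) = 3/2/2 by norm_num, div_pow (3/2:ℝ) 2]
    field_simp; ring
  have h2 : 7 * 2 ^ s * a^2 / (b / P * (3/2)^s + a / P * 2^s) ≤ 7 * (P * a) := by
    calc _ ≤ 7 * 2 ^ s * a^2 / (a / P * 2^s) := by
          gcongr; have : 0 < b / P * (3/2)^s := by positivity
          linarith
      _ = _ := by field_simp
  have h3 : b^2 / (b / P * (3/2)^s + a / P * 2^s) ≤ P * b * (2/3)^s := by
    calc _ ≤ b^2 / (b / P * (3/2)^s) := by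
          gcongr; have : 0 < a / P * 2^s := by positivity
          linarith
      _ = _ := by rw [show (2/3:ℝ) = (3/2)⁻¹ by norm_num, inv_pow]; field_simp
  rw [h1, add_div]
  linarith

lemma geom_bound (x : ℝ) (hx : 0 < x) (hx1 : x < 1) (S : ℕ) :
    ∑ s ∈ Finset.range S, x ^ s ≤ 1 / (1 - x) := by
  rw [geom_sum_eq hx1.ne, ← neg_div_neg_eq]
  have : 0 < 1 - x := by linarith
  have h : (0:ℝ) < x ^ S := by positivity
  rw [neg_sub, neg_sub]
  gcongr; linarith

lemma half_geom (S : ℕ) : ∑ s ∈ Finset.range S, (1/2 : ℝ) ^ s ≤ 2 := by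
  have := geom_bound (1/2) (by norm_num) (by norm_num) S
  norm_num at this ⊢; linarith

set_option maxHeartbeats 1600000 in
open Classical in
lemma core {m d : ℕ} (hm : 0 < m) (hd : 1 < d) {r k δ : ℝ} (hr : 0 < r) (hrk : r ≤ k)
    (hδ : 0 < δ) (hδ1 : δ < 1) (A B : Fin m → Fin d → ℝ)
    (hA : ∀ i j, 0 ≤ A i j ∧ A i j ≤ 1) (hB : ∀ i j, 0 ≤ B i j ∧ B i j ≤ 1) :
    ((Finset.univ.filter fun σ : Fin m → Bool => ∃ w : Fin d → ℝ, (∀ j, 0 ≤ w j) ∧ ∑ j, w j ≤ k ∧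
      128 * (Real.sqrt (m * (r * k)) * 
          Real.sqrt (Real.log d * (Real.log (3 * m)) ^ 3 + Real.log (1 / δ))) <
        ∑ i, sg (σ i) * (max 0 (r - ∑ j, w j * B i j) - max 0 (r - ∑ j, w j * A i j))).card : ℝ)
      ≤ 2 ^ m * (δ / 2) := by
  have hk : 0 < k := hr.trans_le hrk
  have hmR : (1:ℝ) ≤ m := by exact_mod_cast hm
  have hm0 : (0:ℝ) < m := by linarith
  have hM : 0 < m * (r * k) := by positivity
  have hd2 : (2:ℝ) ≤ d := by exact_mod_cast hd
  have hlog2 : Real.log 2 ≤ Real.log d := Real.log_le_log (by norm_num) hd2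
  have hl2 : 0.69 < Real.log 2 := by have := Real.log_two_gt_d9; linarith
  have hl2' : Real.log 2 < 0.7 := by have := Real.log_two_lt_d9; linarith
  have hL : 0 < Real.log (1/δ) := Real.log_pos (by rw [lt_div_iff₀ hδ]; linarith)
  set P := Real.sqrt (m * (r * k)) with hPdef
  have hP : 0 < P := Real.sqrt_pos.2 hM
  have hP2 : m * (r * k) = P^2 := (Real.sq_sqrt hM.le).symm
  set a := Real.sqrt (Real.log d) with hadef
  have ha : 0 < a := Real.sqrt_pos.2 (by linarith)
  have ha2 : a^2 = Real.log d := Real.sq_sqrt (by linarith)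
  set b := Real.sqrt (Real.log (1/δ)) with hbdef
  have hb : 0 < b := Real.sqrt_pos.2 hL
  have hb2 : b^2 = Real.log (1/δ) := Real.sq_sqrt hL.le
  let A' : Fin m → Option (Fin d) → ℝ := fun i o => k * o.elim 0 (A i)
  let B' : Fin m → Option (Fin d) → ℝ := fun i o => k * o.elim 0 (B i)
  have hA' : ∀ i j, 0 ≤ A' i j ∧ A' i j ≤ k := by
    rintro i (_ | j)
    · simp [A', hk.le]
    · have := hA i j
      simp only [A', Option.elim]
      constructor <;> nlinarith
  have hB' : ∀ i j, 0 ≤ B' i j ∧ B' i j ≤ k := by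
    rintro i (_ | j)
    · simp [B', hk.le]
    · have := hB i j
      simp only [B', Option.elim]
      constructor <;> nlinarith
  let l : ℕ → ℝ := fun s => b / P * (3/2)^s + a / P * 2^s
  let c : ℕ → ℝ := fun s => 7 * 2 ^ s * a^2 + b^2
  have hl : ∀ s, 0 < l s := fun s => by positivity
  let S := Nat.log 2 m + 1
  have hS1 : (m:ℝ) ≤ 2 ^ S := by
    exact_mod_cast (Nat.lt_pow_succ_log_self (by norm_num) m).le
  have hlm : 0 ≤ Real.log m := Real.log_nonneg hmR
  have hell : Real.log (3 * m) = Real.log 3 + Real.log m :=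
    Real.log_mul (by norm_num) hm0.ne'
  have hl3 : 1 ≤ Real.log 3 := by
    rw [Real.le_log_iff_exp_le (by norm_num)]
    have := Real.exp_one_lt_d9; linarith
  have hS2 : (S:ℝ) + 1 ≤ 2 * Real.log (3 * m) := by
    have h1 : ((2 ^ Nat.log 2 m : ℕ):ℝ) ≤ m := by exact_mod_cast Nat.pow_log_le_self 2 hm.ne'
    have h2 := Real.log_le_log (by positivity) h1
    push_cast at h2
    rw [Real.log_pow] at h2
    have h3 : (0:ℝ) ≤ (Nat.log 2 m : ℝ) := by positivity
    simp only [S]; push_cast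
    rw [hell]; nlinarith
  -- bad events
  let F0 := Finset.univ.filter fun σ : Fin m → Bool =>
      ∃ t, l 0 / 2 * ∑ i, Tr.H r A' B' 0 t i ^ 2 + c 0 / l 0 < ∑ i, sg (σ i) * Tr.H r A' B' 0 t i
  let F : ℕ → Finset (Fin m → Bool) := fun s => Finset.univ.filter fun σ : Fin m → Bool =>
      ∃ t : Tr (Option (Fin d)) (s+1),
        l s / 2 * ∑ i, (Tr.H r A' B' (s+1) t i - Tr.H r A' B' s t.1 i) ^ 2 + c s / l s
          < ∑ i, sg (σ i) * (Tr.H r A' B' (s+1) t i - Tr.H r A' B' s t.1 i)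
  have hcard : ∀ s, Real.log (Fintype.card (Tr (Option (Fin d)) s)) ≤ 2 ^ s * (2 * Real.log d) := by
    intro s
    rw [Tr.card]
    simp only [Fintype.card_option, Fintype.card_fin]
    push_cast
    rw [Real.log_pow]
    push_cast
    gcongr
    have : Real.log ((d:ℝ)^2) = 2 * Real.log d := by rw [Real.log_pow]; norm_num
    rw [← this]
    apply Real.log_le_log (by positivity)
    nlinarith
  have hexp : ∀ n : ℕ, Real.exp (-(Real.log (1/δ) + n * Real.log 2)) = δ * (1/2)^n := by
    intro n
    rw [neg_add, Real.exp_add, ← Real.log_inv, Real.exp_log (by positivity), ← mul_neg, ← Real.log_inv,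
      Real.exp_nat_mul, Real.exp_log (by norm_num)]
    norm_num
  have hF0 : (F0.card : ℝ) ≤ 2 ^ m * (δ * (1/2)^2) := by
    rw [← hexp 2]
    refine chern_max (fun t i => Tr.H r A' B' 0 t i) (l 0) (c 0) _ (hl 0) ?_
    have := hcard 0
    simp only [c, ha2, hb2]
    norm_num at this ⊢
    linarith
  have hF : ∀ s, ((F s).card : ℝ) ≤ 2 ^ m * (δ * (1/2)^(s+3)) := by
    intro s
    rw [← hexp (s+3)]
    refine chern_max (fun (t : Tr (Option (Fin d)) (s+1)) i => Tr.H r A' B' (s+1) t i - Tr.H r A' B' s t.1 i) (l s) (c s) _ (hl s) ?_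
    have h1 := hcard (s+1)
    have h2 : ((s:ℝ) + 3) ≤ 3 * 2 ^ s := by
      have : s + 1 ≤ 2 ^ s := Nat.lt_two_pow_self
      have : (s:ℝ) + 1 ≤ 2 ^ s := by exact_mod_cast this
      have : (1:ℝ) ≤ 2 ^ s := one_le_pow₀ (by norm_num)
      linarith
    have h3 : ((s:ℝ) + 3) * Real.log 2 ≤ 3 * 2 ^ s * Real.log d :=
      mul_le_mul h2 hlog2 (by linarith) (by positivity)
    simp only [c, ha2, hb2]
    rw [pow_succ] at h1
    push_cast
    linarith
  refine le_trans (b := ((F0 ∪ (Finset.range S).biUnion F).card : ℝ)) ?_ ?_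
  · refine Nat.cast_le.2 (Finset.card_le_card fun σ hσ => ?_)
    by_contra hσ'
    rw [Finset.mem_union, not_or] at hσ'
    obtain ⟨hn0, hns⟩ := hσ'
    obtain ⟨w, hw0, hwk, hlt⟩ := (Finset.mem_filter.1 hσ).2
    simp only [F0, Finset.mem_filter, Finset.mem_univ, true_and, not_exists, not_lt] at hn0
    simp only [F, Finset.mem_biUnion, Finset.mem_range, Finset.mem_filter, Finset.mem_univ, 
      true_and, not_exists, not_and, not_lt] at hns
    let q : Option (Fin d) → ℝ := fun o => o.elim (1 - (∑ j, w j) / k) (fun j => w j / k)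
    have hq0 : ∀ j, 0 ≤ q j := by
      rintro (_ | j)
      · simp only [q, Option.elim, sub_nonneg]; exact (div_le_one hk).2 hwk
      · exact div_nonneg (hw0 j) hk.le
    have hq1 : ∑ j, q j = 1 := by
      rw [Fintype.sum_option]
      simp only [q, Option.elim]
      rw [← Finset.sum_div]; ring
    have hqs : ∀ i, hq r A' B' q i = 
        max 0 (r - ∑ j, w j * B i j) - max 0 (r - ∑ j, w j * A i j) := by
      intro i
      unfold hq
      have : ∀ X : Fin d → ℝ, ∑ o : Option (Fin d), q o * (k * o.elim 0 X) = ∑ j, w j * X j := by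
        intro X
        rw [Fintype.sum_option]
        simp only [q, Option.elim]
        rw [mul_zero, mul_zero, zero_add]
        exact Finset.sum_congr rfl fun j _ => by field_simp
      simp only [A', B', this]
    have hch := chain hr.le hrk hA' hB' hq0 hq1 σ l c S (P / m) (by positivity) hl hn0 hns
    simp_rw [hqs] at hch
    have hlev : ∀ s, l s / 2 * (m * (24 * (r * k) / 2 ^ s)) + c s / l s ≤
        P * b * (12 * (3/4)^s + (2/3)^s) + 19 * (P * a) := by
      intro s
      have := level_bound P a b (m * (r * k)) hP hP2 ha hb s
      have e : (m:ℝ) * (24 * (r * k) / 2 ^ s) = 24 * (m * (r * k)) / 2 ^ s := by ring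
      rw [e]; exact this
    have hsum : ∑ s ∈ Finset.range S, (l s / 2 * (m * (24 * (r * k) / 2 ^ s)) + c s / l s)
        ≤ P * b * 51 + S * (19 * (P * a)) := by
      refine (Finset.sum_le_sum fun s _ => hlev s).trans ?_
      rw [Finset.sum_add_distrib, ← Finset.mul_sum, Finset.sum_add_distrib, ← Finset.mul_sum]
      have g1 := geom_bound (3/4) (by norm_num) (by norm_num) S
      have g2 := geom_bound (2/3) (by norm_num) (by norm_num) S
      simp only [Finset.sum_const, Finset.card_range, nsmul_eq_mul]
      gcongr
      norm_num at g1 g2 ⊢; linarith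
    have hrem : m * (P / m / 2 + 8 * (r * k) / 2 ^ S / (2 * (P / m))) ≤ 5 * P := by
      have h1 : 8 * (r * k) / 2 ^ S / (2 * (P / m)) ≤ 8 * (r * k) / m / (2 * (P / m)) := by
        gcongr
      have h2 : m * (P / m / 2 + 8 * (r * k) / m / (2 * (P / m))) = P / 2 + 4 * (m * (r * k)) / P := by
        field_simp; norm_num; ring
      have h3 : 4 * (m * (r * k)) / P = 4 * P := by rw [hP2]; field_simp
      have h4 := mul_le_mul_of_nonneg_left h1 hm0.le
      rw [mul_add] at h2 ⊢
      linarith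
    have h0' := hlev 0
    simp only [pow_zero] at h0' hch
    have htot := hlt.trans_le hch
    set R := Real.sqrt (Real.log d * (Real.log (3 * m)) ^ 3 + Real.log (1 / δ)) with hR
    have hl1 : 1 ≤ Real.log (3 * m) := by rw [hell]; linarith
    have hpos : 0 ≤ Real.log d * (Real.log (3 * m)) ^ 3 :=
      mul_nonneg (by linarith) (by positivity)
    have hbR : b ≤ R := Real.sqrt_le_sqrt (by linarith)
    have haR : a * Real.log (3 * m) ≤ R := by
      apply Real.le_sqrt_of_sq_le
      rw [mul_pow, ha2]
      have : Real.log (3*m) ^ 2 ≤ Real.log (3*m) ^ 3 := pow_le_pow_right₀ hl1 (by norm_num)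
      have := mul_le_mul_of_nonneg_left this (by linarith : 0 ≤ Real.log d)
      linarith
    have ha12 : 1/2 ≤ a := Real.le_sqrt_of_sq_le (by norm_num; linarith)
    have hR12 : 1/2 ≤ R := by nlinarith
    have hSa : (S + 1) * a ≤ 2 * R := by nlinarith
    have hfin : 64 * b + 19 * ((S + 1) * a) + 5 ≤ 112 * R := by linarith
    have := mul_le_mul_of_nonneg_left hfin hP.le
    have hPR : 0 < P * R := by positivity
    nlinarith
  · refine le_trans (Nat.cast_le.2 (Finset.card_union_le _ _)) ?_
    push_cast
    have h1 : (((Finset.range S).biUnion F).card : ℝ) ≤ ∑ s ∈ Finset.range S, 2 ^ m * (δ * (1/2)^(s+3)) := by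
      refine le_trans (Nat.cast_le.2 Finset.card_biUnion_le) ?_
      push_cast
      exact Finset.sum_le_sum fun s _ => hF s
    have h2 : ∑ s ∈ Finset.range S, 2 ^ m * (δ * (1/2)^(s+3)) = 
        2 ^ m * δ / 8 * ∑ s ∈ Finset.range S, (1/2:ℝ)^s := by
      rw [Finset.mul_sum]
      exact Finset.sum_congr rfl fun s _ => by rw [pow_add]; ring
    have h3 := half_geom S
    have h4 : 0 < 2 ^ m * δ / 8 := by positivity
    nlinarith

lemma ghost {Z : Type*} [MeasurableSpace Z] {m : ℕ} (hm : 0 < m) (D : Measure Z) [IsProbabilityMeasure D]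
    (f : Z → ℝ) (hf : Measurable f) (r c : ℝ) (_hr : 0 < r) (hc : 0 < c) (hb : ∀ᵐ p ∂D, f p ∈ Set.Icc 0 r)
    (hrc : 2 * r ^ 2 ≤ m * c ^ 2) :
    1 / 2 ≤ (Measure.pi fun _ : Fin m => D) {S | m * ∫ p, f p ∂D - m * c < ∑ i, f (S i)} := by
  have hL : MemLp f 2 D := by
    refine MemLp.of_bound hf.aestronglyMeasurable r ?_
    filter_upwards [hb] with p hp
    rw [Real.norm_eq_abs, abs_of_nonneg hp.1]; exact hp.2
  have hint : Integrable f D := hL.integrable (by norm_num)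
  have hv : ProbabilityTheory.variance f D ≤ r ^ 2 := by
    have := ProbabilityTheory.variance_le_sq_of_bounded hb hf.aemeasurable
    nlinarith
  have hm0 : (0:ℝ) < m := by exact_mod_cast hm
  set μ := Measure.pi fun _ : Fin m => D
  set X : (Fin m → Z) → ℝ := ∑ i, fun S => f (S i) with hX
  have hXa : ∀ S, X S = ∑ i, f (S i) := fun S => by simp [hX]
  have hVX : ProbabilityTheory.variance X μ ≤ m * r ^ 2 := by
    rw [hX, ProbabilityTheory.variance_sum_pi (X := fun _ => f) (fun _ => hL)]
    simp; gcongr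
  have hLi : ∀ i : Fin m, MemLp (fun S : Fin m → Z => f (S i)) 2 μ := fun i =>
    hL.comp_measurePreserving (measurePreserving_eval (fun _ : Fin m => D) i)
  have hXL : MemLp X 2 μ := memLp_finsetSum' _ fun i _ => hLi i
  have hEX : ∫ S, X S ∂μ = m * ∫ p, f p ∂D := by
    simp_rw [hXa]
    rw [integral_finset_sum _ fun i _ => (hLi i).integrable (by norm_num)]
    have : ∀ i : Fin m, ∫ S : Fin m → Z, f (S i) ∂μ = ∫ p, f p ∂D := fun i => 
      integral_comp_eval (μ := fun _ : Fin m => D) (i := i) hf.aestronglyMeasurable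
    simp [this]
  have ch := ProbabilityTheory.meas_ge_le_variance_div_sq hXL (c := m * c) (by positivity)
  rw [hEX] at ch
  have h2 : μ {S | m * c ≤ |X S - m * ∫ p, f p ∂D|} ≤ 1 / 2 := by
    refine ch.trans ?_
    have : (1/2 : ENNReal) = ENNReal.ofReal (1/2) := by
      rw [ENNReal.ofReal_div_of_pos (by norm_num)]; simp
    rw [this]
    apply ENNReal.ofReal_le_ofReal
    rw [div_le_iff₀ (by positivity)]
    nlinarith
  have hXm : Measurable X := by
    have : X = fun S => ∑ i, f (S i) := funext hXa
    rw [this]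
    exact Finset.measurable_sum _ fun i _ => hf.comp (measurable_pi_apply i)
  have hms : MeasurableSet {S | m * c ≤ |X S - m * ∫ p, f p ∂D|} :=
    measurableSet_le measurable_const ((hXm.sub_const _).abs)
  have h3 : μ {S | m * c ≤ |X S - m * ∫ p, f p ∂D|}ᶜ = 1 - μ {S | m * c ≤ |X S - m * ∫ p, f p ∂D|} :=
    prob_compl_eq_one_sub hms
  calc (1/2 : ENNReal) = 1 - 1/2 := by simp
    _ ≤ 1 - μ {S | m * c ≤ |X S - m * ∫ p, f p ∂D|} := tsub_le_tsub_left h2 1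
    _ = _ := h3.symm
    _ ≤ _ := by
      apply measure_mono
      intro S hS
      simp only [Set.mem_compl_iff, Set.mem_setOf_eq, not_le, hXa] at hS ⊢
      have := (abs_lt.1 hS).1
      linarith

def swp {Z : Type*} (b : Bool) (z : Z × Z) : Z × Z := if b then z else z.swap

open Classical in
lemma symm_bound {Z : Type*} [MeasurableSpace Z] {m : ℕ} (D : Measure Z) [IsProbabilityMeasure D]
    (B : Set ((Fin m → Z) × (Fin m → Z))) (hB : MeasurableSet B) (η : ℝ) (P : Z → Prop) (hP : ∀ᵐ p ∂D, P p)
    (h : ∀ z : Fin m → Z × Z, (∀ i, P (z i).1 ∧ P (z i).2) →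
      ((Finset.univ.filter fun σ : Fin m → Bool =>
        ((fun i => (swp (σ i) (z i)).1, fun i => (swp (σ i) (z i)).2) : (Fin m → Z) × (Fin m → Z)) ∈ B).card : ℝ)
        ≤ 2 ^ m * η) :
    ((Measure.pi fun _ : Fin m => D).prod (Measure.pi fun _ : Fin m => D)) B ≤ ENNReal.ofReal η := by
  set ν := Measure.pi fun _ : Fin m => D.prod D with hν
  have he := measurePreserving_arrowProdEquivProdArrow Z Z (Fin m) (fun _ => D) (fun _ => D)
  rw [← he.measure_preimage hB.nullMeasurableSet]
  set B' : Set (Fin m → Z × Z) := MeasurableEquiv.arrowProdEquivProdArrow Z Z (Fin m) ⁻¹' B with hB'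
  have hB'm : MeasurableSet B' := he.measurable hB
  have hsw : ∀ σ : Fin m → Bool, MeasurePreserving (fun (z : Fin m → Z × Z) i => swp (σ i) (z i)) ν ν := by
    intro σ
    refine measurePreserving_pi _ _ fun i => ?_
    cases σ i
    · exact Measure.measurePreserving_swap
    · exact MeasurePreserving.id _
  have key : ∑ σ : Fin m → Bool, ν B' ≤ ENNReal.ofReal (2 ^ m * η) := by
    calc ∑ σ : Fin m → Bool, ν B'
        = ∑ σ : Fin m → Bool, ∫⁻ z, ((fun (z : Fin m → Z × Z) i => swp (σ i) (z i)) ⁻¹' B').indicator 1 z ∂ν := by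
          refine Finset.sum_congr rfl fun σ _ => ?_
          rw [lintegral_indicator_one ((hsw σ).measurable hB'm),
            (hsw σ).measure_preimage hB'm.nullMeasurableSet]
      _ = ∫⁻ z, ∑ σ : Fin m → Bool, ((fun (z : Fin m → Z × Z) i => swp (σ i) (z i)) ⁻¹' B').indicator 1 z ∂ν := by
          rw [lintegral_finsetSum]
          exact fun σ _ => measurable_one.indicator ((hsw σ).measurable hB'm)
      _ ≤ ∫⁻ z, ENNReal.ofReal (2 ^ m * η) ∂ν := by
          apply lintegral_mono_ae
          have hall : ∀ᵐ z ∂ν, ∀ i, P (z i).1 ∧ P (z i).2 := by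
            rw [ae_all_iff]
            intro i
            have h1 : ∀ᵐ p ∂(D.prod D), P p.1 ∧ P p.2 :=
              (Measure.quasiMeasurePreserving_fst.ae hP).and (Measure.quasiMeasurePreserving_snd.ae hP)
            exact (measurePreserving_eval (fun _ : Fin m => D.prod D) i).quasiMeasurePreserving.ae h1
          filter_upwards [hall] with z hz
          have := h z hz
          refine le_trans (le_of_eq ?_) (ENNReal.ofReal_le_ofReal this)
          rw [ENNReal.ofReal_natCast, Finset.card_filter]
          push_cast
          refine Finset.sum_congr rfl fun σ _ => ?_
          rw [Set.indicator_apply]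
          rfl
      _ = _ := by simp
  rw [Finset.sum_const, nsmul_eq_mul, Finset.card_univ, ENNReal.ofReal_mul (by positivity)] at key
  have h2 : ((Fintype.card (Fin m → Bool) : ℕ) : ENNReal) = ENNReal.ofReal (2 ^ m) := by
    simp [ENNReal.ofReal_pow]
  rw [h2] at key
  exact (ENNReal.mul_le_mul_iff_right (by simp) ENNReal.ofReal_ne_top).1 key

lemma symm_fubini {Ω : Type*} [MeasurableSpace Ω] (μ : Measure Ω) [IsProbabilityMeasure μ]
    (B : Set (Ω × Ω)) (hB : MeasurableSet B) (A : Set Ω)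
    (h : ∀ S ∈ A, 1 / 2 ≤ μ {S' | (S, S') ∈ B}) : μ A ≤ 2 * (μ.prod μ) B := by
  rw [Measure.prod_apply hB]
  have hmeas := measurable_measure_prodMk_left (ν := μ) hB
  have h1 := mul_meas_ge_le_lintegral (μ := μ) hmeas (1/2)
  have h2 : μ A ≤ μ {x | 1/2 ≤ μ (Prod.mk x ⁻¹' B)} := measure_mono fun S hS => h S hS
  calc μ A ≤ μ {x | 1/2 ≤ μ (Prod.mk x ⁻¹' B)} := h2
    _ = 2 * (1/2 * μ {x | 1/2 ≤ μ (Prod.mk x ⁻¹' B)}) := by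
        rw [← mul_assoc, ENNReal.mul_div_cancel (by norm_num) (by norm_num), one_mul]
    _ ≤ _ := by gcongr

/-- Uniform convergence of the Winnow loss on all-positive-label distributions: there is a
universal constant `C` such that for any distribution on `[0,1]^d × {+1}`, with probability
`1−δ` over a sample of size `m`, every nonnegative `w` with `‖w‖₁ ≤ k` satisfies
`ℓ(w,D) ≤ ℓ̂(w) + C·sqrt(rk(ln(d)·ln³(3m) + ln(1/δ))/m)`. -/
theorem stmt17 : ∃ C : ℝ, 0 < C ∧
    ∀ (d m : ℕ) (k r θ δ : ℝ), 1 < d → 0 < m → 0 ≤ r → r ≤ k → θ = r - 1 / 2 →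
    δ ∈ Set.Ioo (0 : ℝ) 1 →
    ∀ D : Measure ((Fin d → ℝ) × ℝ), ∀ _ : IsProbabilityMeasure D,
    (∀ᵐ p ∂D, p.2 = 1 ∧ ∀ j, p.1 j ∈ Set.Icc (0 : ℝ) 1) →
    ENNReal.ofReal (1 - δ) ≤ (Measure.pi fun _ : Fin m => D)
      {S | ∀ w : Fin d → ℝ, (∀ j, 0 ≤ w j) → (∑ j, |w j|) ≤ k →
        ∫ p, max 0 (1 / 2 - p.2 * ((∑ j, w j * p.1 j) - θ)) ∂D ≤
          (∑ i, max 0 (1 / 2 - (S i).2 * ((∑ j, w j * (S i).1 j) - θ))) / m +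
          C * Real.sqrt (r * k * (Real.log d * (Real.log (3 * m)) ^ 3 +
            Real.log (1 / δ)) / m)} := by
  refine ⟨256, by norm_num, ?_⟩
  intro d m k r θ δ hd hm hr hrk hθ hδ D hD hae
  obtain ⟨hδ0, hδ1⟩ := hδ
  have hm0 : (0:ℝ) < m := by exact_mod_cast hm
  let f : (Fin d → ℝ) → (Fin d → ℝ) × ℝ → ℝ := fun w p =>
    max 0 (1 / 2 - p.2 * ((∑ j, w j * p.1 j) - θ))
  have hfc : ∀ w, Continuous (f w) := fun w => by fun_prop
  have hfeq : ∀ w p, p.2 = 1 → f w p = max 0 (r - ∑ j, w j * p.1 j) := by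
    intro w p hp
    simp only [f, hp, hθ]
    congr 1; ring
  have hfb : ∀ w, (∀ j, 0 ≤ w j) → ∀ᵐ p ∂D, f w p ∈ Set.Icc 0 r := by
    intro w hw
    filter_upwards [hae] with p hp
    rw [hfeq w p hp.1]
    refine ⟨le_max_left _ _, max_le hr ?_⟩
    have : 0 ≤ ∑ j, w j * p.1 j := Finset.sum_nonneg fun j _ => mul_nonneg (hw j) (hp.2 j).1
    linarith
  set ε := 256 * Real.sqrt (r * k * (Real.log d * (Real.log (3 * m)) ^ 3 +
            Real.log (1 / δ)) / m) with hε
  set G : Set (Fin m → (Fin d → ℝ) × ℝ) := {S | ∀ w : Fin d → ℝ, (∀ j, 0 ≤ w j) → (∑ j, |w j|) ≤ k →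
        ∫ p, f w p ∂D ≤ (∑ i, f w (S i)) / m + ε} with hG
  change ENNReal.ofReal (1 - δ) ≤ (Measure.pi fun _ : Fin m => D) G
  set μ := Measure.pi fun _ : Fin m => D with hμ
  rcases hr.eq_or_lt with hr0 | hrpos
  · have : G = Set.univ := by
      refine Set.eq_univ_of_forall fun S => ?_
      intro w hw _
      have h0 : ∫ p, f w p ∂D = 0 := by
        apply integral_eq_zero_of_ae
        filter_upwards [hfb w hw] with p hp
        rw [← hr0] at hp
        exact le_antisymm hp.2 hp.1
      rw [h0]
      have : 0 ≤ ∑ i, f w (S i) := Finset.sum_nonneg fun i _ => le_max_left _ _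
      positivity
    rw [this, measure_univ]
    exact ENNReal.ofReal_le_one.2 (by linarith)
  have hk : 0 < k := hrpos.trans_le hrk
  set Q := Real.log d * (Real.log (3 * m)) ^ 3 + Real.log (1 / δ) with hQ
  have hL : 0 < Real.log (1/δ) := Real.log_pos (by rw [lt_div_iff₀ hδ0]; linarith)
  have hQ1 : 1/2 ≤ Q := by
    have hd2 : (2:ℝ) ≤ d := by exact_mod_cast hd
    have hlog2 : Real.log 2 ≤ Real.log d := Real.log_le_log (by norm_num) hd2
    have hl2 := Real.log_two_gt_d9
    have hmR : (1:ℝ) ≤ m := by exact_mod_cast hm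
    have hl3 : 1 ≤ Real.log (3 * m) := by
      rw [Real.le_log_iff_exp_le (by positivity)]
      have := Real.exp_one_lt_d9; linarith
    have : 1 ≤ Real.log (3 * m) ^ 3 := one_le_pow₀ hl3
    nlinarith
  have hεpos : 0 < ε := by
    have : 0 < r * k * Q / m := by positivity
    have := Real.sqrt_pos.2 this
    positivity
  have hεsq : m * ε ^ 2 = 65536 * (r * k * Q) := by
    rw [hε, mul_pow, Real.sq_sqrt (by positivity)]
    field_simp; norm_num
  have hεm : m * (ε / 2) = 128 * (Real.sqrt (m * (r * k)) * Real.sqrt Q) := by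
    rw [← Real.sqrt_mul (by positivity)]
    have : m * (r * k) * Q = (m:ℝ) ^ 2 * (r * k * Q / m) := by field_simp
    rw [this, Real.sqrt_mul (by positivity), Real.sqrt_sq hm0.le, hε]
    ring
  let B : Set ((Fin m → (Fin d → ℝ) × ℝ) × (Fin m → (Fin d → ℝ) × ℝ)) :=
    {p | ∃ w : Fin d → ℝ, ((∀ j, 0 ≤ w j) ∧ ∑ j, w j ≤ k) ∧
      m * (ε / 2) < ∑ i, (f w (p.2 i) - f w (p.1 i))}
  have hBm : MeasurableSet B := by
    have hBU : B = ⋃ w ∈ {w : Fin d → ℝ | (∀ j, 0 ≤ w j) ∧ ∑ j, w j ≤ k},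
        {p : (Fin m → (Fin d → ℝ) × ℝ) × (Fin m → (Fin d → ℝ) × ℝ) |
          m * (ε / 2) < ∑ i, (f w (p.2 i) - f w (p.1 i))} := by
      ext p
      simp only [B, Set.mem_iUnion, exists_prop]
      rfl
    rw [hBU]
    refine (isOpen_biUnion fun w _ => isOpen_lt continuous_const ?_).measurableSet
    refine continuous_finsetSum _ fun i _ => ?_
    exact ((hfc w).comp ((continuous_apply i).comp continuous_snd)).sub
      ((hfc w).comp ((continuous_apply i).comp continuous_fst))
  have h1 : μ Gᶜ ≤ 2 * (μ.prod μ) B := by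
    refine symm_fubini μ B hBm Gᶜ fun S hS => ?_
    have hS' : ¬ ∀ w : Fin d → ℝ, (∀ j, 0 ≤ w j) → (∑ j, |w j|) ≤ k →
        ∫ p, f w p ∂D ≤ (∑ i, f w (S i)) / m + ε := hS
    push Not at hS'
    obtain ⟨w, hw0, hwk, hlt⟩ := hS'
    refine (ghost hm D (f w) (hfc w).measurable r (ε / 2) hrpos (by positivity) (hfb w hw0) ?_).trans
      (measure_mono fun S' hS' => ?_)
    · have : r * r * 1 ≤ r * k * (2 * Q) := by gcongr; linarith
      nlinarith
    · have hS2 : m * ∫ p, f w p ∂D - m * (ε / 2) < ∑ i, f w (S' i) := hS'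
      refine ⟨w, ⟨hw0, ?_⟩, ?_⟩
      · simpa only [abs_of_nonneg (hw0 _)] using hwk
      · rw [Finset.sum_sub_distrib]
        have h3 := mul_lt_mul_of_pos_left hlt hm0
        rw [mul_add, mul_div_cancel₀ _ hm0.ne'] at h3
        dsimp only
        linarith
  have h2 : (μ.prod μ) B ≤ ENNReal.ofReal (δ / 2) := by
    classical
    refine symm_bound D B hBm (δ / 2) _ hae fun z hz => ?_
    refine le_trans (Nat.cast_le.2 (Finset.card_le_card ?_))
      (core hm hd hrpos hrk hδ0 hδ1 (fun i => (z i).1.1) (fun i => (z i).2.1)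
        (fun i j => (hz i).1.2 j) (fun i j => (hz i).2.2 j))
    intro σ hσ
    obtain ⟨w, ⟨hw0, hwk⟩, hlt⟩ := (Finset.mem_filter.1 hσ).2
    refine Finset.mem_filter.2 ⟨Finset.mem_univ _, w, hw0, hwk, ?_⟩
    rw [← hεm]
    refine hlt.trans_le (le_of_eq (Finset.sum_congr rfl fun i _ => ?_))
    rw [← hfeq w _ (hz i).1.1, ← hfeq w _ (hz i).2.1]
    rcases hb : σ i with _ | _ <;> simp [swp, sg, hb]
  have h3 : μ Gᶜ ≤ ENNReal.ofReal δ := by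
    refine h1.trans ((mul_le_mul_right h2 2).trans (le_of_eq ?_))
    rw [show (2 : ENNReal) = ENNReal.ofReal 2 by simp, ← ENNReal.ofReal_mul (by norm_num)]
    congr 1; ring
  have h4 : (1 : ENNReal) ≤ μ G + μ Gᶜ := by
    rw [← measure_univ (μ := μ), ← Set.union_compl_self G]
    exact measure_union_le _ _
  rw [ENNReal.ofReal_sub _ hδ0.le, ENNReal.ofReal_one, tsub_le_iff_right]
  exact h4.trans (by gcongr)
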